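/- Let K be a cyclic quartic extension of ℚ (a Galois extension of degree 4 with cyclic Galois group) and let F be its unique nontrivial intermediate subfield. Then F = ℚ(√n) for some positive squarefree integer n of the form n = 2^a·p₁·p₂⋯p_k, where a ∈ {0,1} and the p_i are primes satisfying p_i ≡ 1 (mod 4). In particular, F is equal to none of ℚ(√−1), ℚ(√−3), and ℚ(√3). -/

import Mathlib

/-!
Let `σ` generate the Galois group of a cyclic extension `L / k` of degree divisible by `4`, and let
`x ∈ L` satisfy `x ^ 2 = c ∈ k` and `σ x = -x`. Since `σ ^ 2` has even order, `-1` is one of its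
eigenvalues; for an eigenvector `y`, the quotient `w = σ y / y` is fixed by `σ ^ 2` and satisfies
`w * σ w = -1`. Writing `w = u + v * x` with `u, v ∈ k` turns this into `u ^ 2 - c * v ^ 2 = -1`,
so `c` is a sum of two squares in `k`. Over `ℚ`, a squarefree `c` of this kind is positive and has
no prime factor congruent to `3` modulo `4`, which also excludes `-1`, `-3` and `3`.
-/

open Module
open scoped IntermediateField

section CyclicExtension

variable {k L : Type*} [Field k] [Field L] [Algebra k L] [FiniteDimensional k L]

theorem exists_apply_eq_neg_of_even_orderOf {σ : Gal(L/k)} (hσ : Even (orderOf σ)) :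
    ∃ y : L, y ≠ 0 ∧ σ y = -y := by
  have hroot : (minpoly k σ.toLinearMap).IsRoot (-1) := by
    simp [minpoly_algEquiv_toLinearMap σ (isOfFinOrder_of_finite σ), hσ.neg_one_pow]
  obtain ⟨y, hy⟩ := (End.hasEigenvalue_of_isRoot hroot).exists_hasEigenvector
  exact ⟨y, hy.2, by simpa using hy.apply_eq_smul⟩

theorem exists_mul_apply_eq_neg_one_of_four_dvd_orderOf {σ : Gal(L/k)} (hσ : 4 ∣ orderOf σ) :
    ∃ w : L, σ (σ w) = w ∧ w * σ w = -1 := by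
  have heven : Even (orderOf (σ ^ 2)) := by
    rw [orderOf_pow, Nat.gcd_eq_right (dvd_trans (by norm_num) hσ), even_iff_two_dvd]
    exact Nat.dvd_div_of_mul_dvd hσ
  obtain ⟨y, hy0, hy⟩ := exists_apply_eq_neg_of_even_orderOf heven
  replace hy : σ (σ y) = -y := by simpa [pow_two] using hy
  have hσy0 : σ y ≠ 0 := by simpa using hy0
  refine ⟨σ y / y, ?_, ?_⟩
  · simp [hy]
  · rw [map_div₀, hy]
    field_simp

theorem mem_range_algebraMap_iff_of_forall_mem_zpowers [IsGalois k L] {σ : Gal(L/k)}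
    (hσ : ∀ τ, τ ∈ Subgroup.zpowers σ) {z : L} : z ∈ Set.range (algebraMap k L) ↔ σ z = z := by
  refine ⟨fun ⟨r, hr⟩ ↦ hr ▸ σ.commutes r, fun hz ↦ ?_⟩
  have hstab : Subgroup.zpowers σ ≤ MulAction.stabilizer Gal(L/k) z := by
    simpa [Subgroup.zpowers_le] using hz
  rw [IsGalois.mem_range_algebraMap_iff_fixed]
  exact fun τ ↦ hstab (hσ τ)

theorem exists_eq_sq_add_sq_of_mul_sq_eq_sq_add_one [NeZero (2 : k)] {c u v : k}
    (h : c * v ^ 2 = u ^ 2 + 1) : ∃ a b : k, c = a ^ 2 + b ^ 2 := by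
  have h2 : (2 : k) ≠ 0 := NeZero.ne 2
  by_cases hv : v = 0
  · -- Here `u` is a square root of `-1`, and every element is a difference of two squares.
    have hu : u ^ 2 = -1 := by linear_combination -h + c * v * hv
    refine ⟨(c + 1) / 2, u * ((c - 1) / 2), ?_⟩
    rw [mul_pow, hu]
    field_simp
    ring
  · refine ⟨u / v, 1 / v, ?_⟩
    field_simp
    linear_combination h

theorem exists_eq_sq_add_sq_of_sq_eq_algebraMap [NeZero (2 : k)] [IsGalois k L]
    [IsCyclic Gal(L/k)] (hdeg : 4 ∣ finrank k L) {x : L} {c : k} (hx : x ^ 2 = algebraMap k L c) :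
    ∃ a b : k, c = a ^ 2 + b ^ 2 := by
  obtain ⟨σ, hσ⟩ := IsCyclic.exists_generator (α := Gal(L/k))
  have hfixed {z : L} (hz : σ z = z) : ∃ r, algebraMap k L r = z :=
    (mem_range_algebraMap_iff_of_forall_mem_zpowers hσ).2 hz
  have hord : 4 ∣ orderOf σ := by
    rwa [orderOf_eq_card_of_forall_mem_zpowers hσ, IsGalois.card_aut_eq_finrank]
  have hσx : σ x = x ∨ σ x = -x := by
    rw [← sq_eq_sq_iff_eq_or_eq_neg, ← map_pow, hx, σ.commutes]
  obtain rfl | hx0 := eq_or_ne x 0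
  · exact ⟨0, 0, by simpa using hx.symm⟩
  rcases hσx with hσx | hσx
  · obtain ⟨r, rfl⟩ := hfixed hσx
    exact ⟨r, 0, (algebraMap k L).injective (by simp [← hx])⟩
  · have h2 : (2 : L) ≠ 0 :=
      map_ofNat (algebraMap k L) 2 ▸ (map_ne_zero _).2 (NeZero.ne (2 : k))
    have hσ2 : σ 2 = 2 := map_ofNat σ 2
    obtain ⟨w, hσσw, hw⟩ := exists_mul_apply_eq_neg_one_of_four_dvd_orderOf hord
    obtain ⟨u, hu⟩ := hfixed (z := (w + σ w) / 2) (by simp [hσσw, hσ2, add_comm])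
    obtain ⟨v, hv⟩ := hfixed (z := (w - σ w) / (2 * x)) (by
      simp only [map_div₀, map_sub, map_mul, hσ2, hσσw, hσx]
      field_simp
      ring)
    apply exists_eq_sq_add_sq_of_mul_sq_eq_sq_add_one (u := u) (v := v)
    apply (algebraMap k L).injective
    simp only [map_mul, map_add, map_pow, map_one, hu, hv, ← hx]
    field_simp
    linear_combination -4 * hw

end CyclicExtension

theorem exists_nat_eq_sq_add_sq_of_rat {n : ℕ} {u v : ℚ} (h : (n : ℚ) = u ^ 2 + v ^ 2) :
    ∃ a b : ℕ, n = a ^ 2 + b ^ 2 := by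
  obtain rfl | hn := eq_or_ne n 0
  · exact ⟨0, 0, rfl⟩
  set m := u.den * v.den with hm
  have hm0 : m ^ 2 ≠ 0 := pow_ne_zero 2 (mul_ne_zero u.den_ne_zero v.den_ne_zero)
  have hcleared : n * m ^ 2 = (u.num * v.den).natAbs ^ 2 + (v.num * u.den).natAbs ^ 2 := by
    zify
    rw [sq_abs, sq_abs]
    qify
    rw [h, ← Rat.mul_den_eq_num u, ← Rat.mul_den_eq_num v, hm]
    push_cast
    ring
  rw [Nat.eq_sq_add_sq_iff]
  intro q hq hq3
  have : Fact q.Prime := ⟨Nat.prime_of_mem_primeFactors hq⟩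
  have heven := Nat.eq_sq_add_sq_iff.1 ⟨_, _, hcleared⟩ q
    (Nat.primeFactors_mono (dvd_mul_right n _) (mul_ne_zero hn hm0) hq) hq3
  rw [padicValNat.mul hn hm0, padicValNat.pow, Nat.even_add] at heven
  exact heven.2 (even_two_mul _)

theorem mod_four_ne_three_of_squarefree_of_eq_sq_add_sq {n a b p : ℕ} (hn : Squarefree n)
    (h : n = a ^ 2 + b ^ 2) (hp : p ∈ n.primeFactors) : p % 4 ≠ 3 := by
  intro hp3
  have hprime := Nat.prime_of_mem_primeFactors hp
  have heven := Nat.eq_sq_add_sq_iff.1 ⟨a, b, h⟩ p hp hp3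
  rw [← Nat.factorization_def n hprime,
    Nat.factorization_eq_one_of_squarefree hn hprime (Nat.dvd_of_mem_primeFactors hp)] at heven
  exact Nat.not_even_one heven

theorem eq_two_pow_mul_prod_of_squarefree_of_eq_sq_add_sq {n a b : ℕ} (hn : Squarefree n)
    (h : n = a ^ 2 + b ^ 2) :
    ∃ (e : ℕ) (s : Finset ℕ), e ≤ 1 ∧ (∀ p ∈ s, p.Prime ∧ p % 4 = 1) ∧
      n = 2 ^ e * ∏ p ∈ s, p := by
  have hodd : ∀ p ∈ n.primeFactors.erase 2, p.Prime ∧ p % 4 = 1 := by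
    intro p hp
    obtain ⟨hp2, hp⟩ := Finset.mem_erase.1 hp
    have hprime := Nat.prime_of_mem_primeFactors hp
    have hp3 := mod_four_ne_three_of_squarefree_of_eq_sq_add_sq hn h hp
    have := hprime.eq_two_or_odd
    exact ⟨hprime, by lia⟩
  have hprod := Nat.prod_primeFactors_of_squarefree hn
  by_cases h2 : 2 ∈ n.primeFactors
  · exact ⟨1, _, le_rfl, hodd, by rw [pow_one, Finset.mul_prod_erase _ (fun p ↦ p) h2, hprod]⟩
  · exact ⟨0, _, zero_le_one, hodd, by
      rw [pow_zero, one_mul, Finset.erase_eq_of_notMem h2, hprod]⟩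

theorem natCast_prime_ne_sq_add_sq_of_mod_four_eq_three {p : ℕ} (hp : p.Prime) (hp3 : p % 4 = 3)
    (u v : ℚ) : (p : ℚ) ≠ u ^ 2 + v ^ 2 := by
  intro h
  obtain ⟨a, b, hab⟩ := exists_nat_eq_sq_add_sq_of_rat h
  exact mod_four_ne_three_of_squarefree_of_eq_sq_add_sq hp.prime.squarefree hab
    (by simp [hp.primeFactors]) hp3

theorem exists_squarefree_int_mul_sq_eq {r : ℚ} (hr : r ≠ 0) :
    ∃ (d : ℤ) (q : ℚ), Squarefree d ∧ q ≠ 0 ∧ r = d * q ^ 2 := by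
  obtain ⟨n, m, hnm, hn⟩ := Nat.sq_mul_squarefree (r.num.natAbs * r.den)
  have hm : m ≠ 0 := by
    rintro rfl
    simp [hr] at hnm
  refine ⟨r.num.sign * n, m / r.den, ?_, by positivity, ?_⟩
  · rwa [← Int.squarefree_natAbs, Int.natAbs_mul, Int.natAbs_sign_of_ne_zero (by simpa),
      one_mul, Int.natAbs_natCast]
  · have hnm' : (m : ℚ) ^ 2 * n = r.num.natAbs * r.den := by exact_mod_cast hnm
    have hnum : (r.num : ℚ) = r.num.sign * r.num.natAbs := by
      rw [← Int.cast_natCast r.num.natAbs, ← Int.cast_mul, Int.sign_mul_natAbs]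
    have hden : (r.den : ℚ) ≠ 0 := by exact_mod_cast r.den_ne_zero
    calc r = r.num / r.den := (Rat.num_div_den r).symm
      _ = r.num.sign * (r.num.natAbs * r.den) / r.den ^ 2 := by
        rw [hnum]
        field_simp
      _ = (r.num.sign * n : ℤ) * (m / r.den) ^ 2 := by
        rw [← hnm']
        push_cast
        ring

section QuadraticSubfield

variable {k L : Type*} [Field k] [Field L] [Algebra k L]

theorem adjoin_simple_smul {a : k} (ha : a ≠ 0) (x : L) : k⟮a • x⟯ = k⟮x⟯ := by
  apply le_antisymm <;> rw [IntermediateField.adjoin_simple_le_iff]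
  · exact k⟮x⟯.smul_mem (IntermediateField.mem_adjoin_simple_self k x)
  · simpa only [inv_smul_smul₀ ha] using
      k⟮a • x⟯.smul_mem (x := a⁻¹) (IntermediateField.mem_adjoin_simple_self k (a • x))

theorem exists_sq_eq_algebraMap_adjoin_eq_of_finrank_eq_two [NeZero (2 : k)]
    {F : IntermediateField k L} [Algebra.IsSeparable k F]
    (hF : finrank k F = 2) :
    ∃ (c : k) (x : L), c ≠ 0 ∧ x ^ 2 = algebraMap k L c ∧ k⟮x⟯ = F := by
  have : Algebra.IsQuadraticExtension k F := ⟨hF⟩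
  have hchar : ringChar k ≠ 2 := fun h ↦ NeZero.ne (2 : k) <| by
    exact_mod_cast h ▸ ringChar.Nat.cast_ringChar (R := k)
  have hroots : (primitiveRoots (finrank k F) k).Nonempty :=
    ⟨-1, (mem_primitiveRoots finrank_pos).2 (hF ▸ IsPrimitiveRoot.neg_one (ringChar k) hchar)⟩
  obtain ⟨x, ⟨c, hc⟩, hx⟩ := exists_root_adjoin_eq_top_of_isCyclic k F hroots
  rw [hF] at hc
  have hadj : k⟮(x : L)⟯ = F := by
    rw [← IntermediateField.lift_adjoin_simple, hx, IntermediateField.lift_top]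
  refine ⟨c, x, ?_, (congrArg Subtype.val hc).symm, hadj⟩
  rintro rfl
  obtain rfl : x = 0 := by simpa using hc.symm
  rw [ZeroMemClass.coe_zero, IntermediateField.adjoin_zero] at hadj
  rw [← hadj, IntermediateField.finrank_bot] at hF
  exact absurd hF (by norm_num)

theorem exists_squarefree_int_sq_eq_adjoin_eq_of_finrank_eq_two {K : Type*} [Field K]
    [Algebra ℚ K] {F : IntermediateField ℚ K} (hF : finrank ℚ F = 2) :
    ∃ (d : ℤ) (x : K), Squarefree d ∧ x ^ 2 = d ∧ ℚ⟮x⟯ = F := by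
  have : FiniteDimensional ℚ F := .of_finrank_pos (hF ▸ two_pos)
  obtain ⟨r, x, hr, hx, hadj⟩ := exists_sq_eq_algebraMap_adjoin_eq_of_finrank_eq_two hF
  obtain ⟨d, q, hd, hq, rfl⟩ := exists_squarefree_int_mul_sq_eq hr
  refine ⟨d, q⁻¹ • x, hd, ?_, by rw [adjoin_simple_smul (inv_ne_zero hq), hadj]⟩
  have hcancel : q⁻¹ ^ 2 * (d * q ^ 2) = (d : ℚ) := by field_simp
  rw [smul_pow, hx, Algebra.smul_def, ← map_mul, hcancel, map_intCast]

theorem finrank_eq_of_finrank_eq_prime_sq {p : ℕ} (hp : p.Prime)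
    (hdeg : finrank k L = p ^ 2) {F : IntermediateField k L}
    (hbot : F ≠ ⊥) (htop : F ≠ ⊤) : finrank k F = p := by
  have : FiniteDimensional k L := .of_finrank_pos (hdeg ▸ pow_pos hp.pos 2)
  have hdvd : finrank k F ∣ p ^ 2 := hdeg ▸ finrank_dvd_finrank_right k F L
  obtain ⟨i, hi, hF⟩ := (Nat.dvd_prime_pow hp).1 hdvd
  interval_cases i
  · exact absurd (IntermediateField.finrank_eq_one_iff.1 (by simpa using hF)) hbot
  · simpa using hF
  · refine absurd (IntermediateField.eq_of_le_of_finrank_eq le_top ?_) htop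
    rw [hF, IntermediateField.finrank_top', hdeg]

end QuadraticSubfield

theorem subfield_of_cyclic_quartic_extension_general
    (K : Type*) [Field K] [NumberField K] [IsGalois ℚ K]
    (hdeg : 4 ∣ finrank ℚ K) (hcyc : IsCyclic Gal(K/ℚ))
    (F : IntermediateField ℚ K) (hF : finrank ℚ F = 2) :
    (∃ n : ℕ, 0 < n ∧ Squarefree n ∧
      (∃ (a : ℕ) (s : Finset ℕ), a ≤ 1 ∧ (∀ p ∈ s, p.Prime ∧ p % 4 = 1) ∧
        n = 2 ^ a * ∏ p ∈ s, p) ∧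
      ∃ x : K, x ^ 2 = (n : K) ∧ ℚ⟮x⟯ = F) ∧
    (∀ x : K, x ^ 2 ≠ -1 ∧ x ^ 2 ≠ -3 ∧ x ^ 2 ≠ 3) := by
  have hsum {x : K} {c : ℚ} (hx : x ^ 2 = c) : ∃ u v : ℚ, c = u ^ 2 + v ^ 2 :=
    exists_eq_sq_add_sq_of_sq_eq_algebraMap hdeg (by simpa using hx)
  refine ⟨?_, fun x ↦ ⟨fun hx ↦ ?_, fun hx ↦ ?_, fun hx ↦ ?_⟩⟩
  · obtain ⟨d, x, hd, hx, hadj⟩ := exists_squarefree_int_sq_eq_adjoin_eq_of_finrank_eq_two hF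
    obtain ⟨u, v, huv⟩ := hsum (c := d) (by simpa using hx)
    lift d to ℕ using by exact_mod_cast huv ▸ add_nonneg (sq_nonneg u) (sq_nonneg v) with n
    rw [Int.squarefree_natCast] at hd
    obtain ⟨a, b, hab⟩ := exists_nat_eq_sq_add_sq_of_rat (n := n) (by simpa using huv)
    refine ⟨n, hd.ne_zero.bot_lt, hd, eq_two_pow_mul_prod_of_squarefree_of_eq_sq_add_sq hd hab, x,
      by simpa using hx, hadj⟩
  · obtain ⟨u, v, huv⟩ := hsum (c := -1) (by simpa using hx)
    linarith [sq_nonneg u, sq_nonneg v]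
  · obtain ⟨u, v, huv⟩ := hsum (c := -3) (by simpa using hx)
    linarith [sq_nonneg u, sq_nonneg v]
  · obtain ⟨u, v, huv⟩ := hsum (c := 3) (by simpa using hx)
    exact natCast_prime_ne_sq_add_sq_of_mod_four_eq_three Nat.prime_three rfl u v (mod_cast huv)

/-- The unique nontrivial subfield of a cyclic quartic extension of `ℚ` is `ℚ(√n)` for some
positive squarefree integer `n = 2^a · p₁ ⋯ p_k` with `a ∈ {0,1}` and all `pᵢ ≡ 1 (mod 4)`;
in particular it is none of `ℚ(√-1)`, `ℚ(√-3)`, `ℚ(√3)`. -/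
theorem subfield_of_cyclic_quartic_extension
    (K : Type*) [Field K] [NumberField K] [IsGalois ℚ K]
    (hdeg : Module.finrank ℚ K = 4) (hcyc : IsCyclic (K ≃ₐ[ℚ] K))
    (F : IntermediateField ℚ K) (hFbot : F ≠ ⊥) (hFtop : F ≠ ⊤) :
    (∃ n : ℕ, 0 < n ∧ Squarefree n ∧
      (∃ (a : ℕ) (s : Finset ℕ), a ≤ 1 ∧ (∀ p ∈ s, p.Prime ∧ p % 4 = 1) ∧
        n = 2 ^ a * ∏ p ∈ s, p) ∧
      ∃ x : K, x ^ 2 = (n : K) ∧ IntermediateField.adjoin ℚ {x} = F) ∧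
    (∀ x : K, x ∈ F → x ^ 2 ≠ (-1 : K) ∧ x ^ 2 ≠ (-3 : K) ∧ x ^ 2 ≠ (3 : K)) := by
  have hF := finrank_eq_of_finrank_eq_prime_sq Nat.prime_two hdeg hFbot hFtop
  exact (subfield_of_cyclic_quartic_extension_general K hdeg.symm.dvd hcyc F hF).imp_right
    fun h x _ ↦ h x
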